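/- Let Θ be a nonempty finite set. For any μ̄ ∈ ΔΘ, any Borel set D ⊆ ΔΘ, any bounded measurable f : ΔΘ → ℝ, and any p ∈ I(μ̄) with p(D) = 1, there exists q ∈ I(μ̄) with q(D) = 1 such that the support of q is an affinely independent subset of ΔΘ (hence of cardinality at most |Θ|) and ∫ f dq ≥ ∫ f dp. -/

import Mathlib

open MeasureTheory

/-- The receiver's best responses `A*_R(μ)` to a belief vector `μ` on a finite state
space. -/
def BRf {A Θ : Type*} [Fintype Θ] (uR : A → Θ → ℝ) (μ : Θ → ℝ) : Set A :=
  {a | ∀ a' : A, ∑ θ, uR a' θ * μ θ ≤ ∑ θ, uR a θ * μ θ}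

/-- The belief simplex `ΔΘ` over a finite state space, viewed as a subspace of `ℝ^Θ`. -/
abbrev Belief (Θ : Type*) [Fintype Θ] : Type _ := {f : Θ → ℝ // f ∈ stdSimplex ℝ Θ}

/-- The sender's upper value function `v` (finite model, state-dependent sender
utility). -/
noncomputable def vF {A Θ : Type*} [Fintype Θ] (uS uR : A → Θ → ℝ) (μ : Θ → ℝ) : ℝ :=
  sSup ((fun a => ∑ θ, uS a θ * μ θ) '' BRf uR μ)

/-- The sender's lower value function `w` (finite model, state-dependent sender
utility). -/
noncomputable def wF {A Θ : Type*} [Fintype Θ] (uS uR : A → Θ → ℝ) (μ : Θ → ℝ) : ℝ :=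
  sInf ((fun a => ∑ θ, uS a θ * μ θ) '' BRf uR μ)

/-- The set `I(μ0)` of information policies: Borel probability measures on the belief
simplex whose barycenter is the prior `μ0`. -/
def IPolF {Θ : Type*} [Fintype Θ] (μ0 : Θ → ℝ) : Set (ProbabilityMeasure (Belief Θ)) :=
  {p | ∀ θ : Θ, ∫ μ, (μ : Belief Θ).1 θ ∂(p : Measure (Belief Θ)) = μ0 θ}

/-- `v̂(μ0)`: the sender's best equilibrium (Bayesian persuasion) value (finite model). -/
noncomputable def vHatF {A Θ : Type*} [Fintype Θ] (uS uR : A → Θ → ℝ) (μ0 : Θ → ℝ) : ℝ :=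
  sSup ((fun p : ProbabilityMeasure (Belief Θ) =>
    ∫ μ, vF uS uR (μ : Belief Θ).1 ∂(p : Measure (Belief Θ))) '' IPolF μ0)

/-- `ŵ(μ0)`: the sender's worst equilibrium value (finite model). -/
noncomputable def wHatF {A Θ : Type*} [Fintype Θ] (uS uR : A → Θ → ℝ) (μ0 : Θ → ℝ) : ℝ :=
  sSup ((fun p : ProbabilityMeasure (Belief Θ) =>
    ∫ μ, wF uS uR (μ : Belief Θ).1 ∂(p : Measure (Belief Θ))) '' IPolF μ0)

/-- The (topological) support of a Borel probability measure on the belief simplex. -/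
def msupport {Θ : Type*} [Fintype Θ] (q : ProbabilityMeasure (Belief Θ)) :
    Set (Belief Θ) :=
  {x | ∀ U : Set (Belief Θ), IsOpen U → x ∈ U → (q : Measure (Belief Θ)) U ≠ 0}

/-!
In finite dimension the mean of an integrable map lies in every convex set, closed or not, that
contains almost all of its values: otherwise a supporting functional at the mean is almost surely
constant, and one descends to its kernel. For `x ↦ (x, f x)` on `D`, this replaces `p` by a convex
combination of Dirac masses at points of `D` with the same barycenter and the same integral of `f`.
As long as the charged points are affinely dependent, moving the weights along an affine dependence,
signed so that the integral of `f` does not decrease, makes one of them vanish.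
-/

open Function

section ConvexIntegral

universe u

variable {V : Type u} [NormedAddCommGroup V] [NormedSpace ℝ V] [FiniteDimensional ℝ V]

lemma exists_strongDual_ne_zero_eq_on_of_affineSpan_ne_top {C : Set V} (hC : C.Nonempty)
    (hspan : affineSpan ℝ C ≠ ⊤) :
    ∃ φ : StrongDual ℝ V, φ ≠ 0 ∧ ∀ y ∈ C, ∀ z ∈ C, φ y = φ z := by
  have hdir : vectorSpan ℝ C ≠ ⊤ := fun h ↦
    hspan ((AffineSubspace.affineSpan_eq_top_iff_vectorSpan_eq_top_of_nonempty ℝ V V hC).2 h)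
  obtain ⟨ψ, hψ, hker⟩ := Submodule.exists_le_ker_of_lt_top _ hdir.lt_top
  refine ⟨LinearMap.toContinuousLinearMap ψ, by simpa using hψ, fun y hy z hz ↦ ?_⟩
  have hyz : ψ (y - z) = 0 := hker (vsub_mem_vectorSpan ℝ hy hz)
  simpa [sub_eq_zero] using hyz

lemma exists_strongDual_ne_zero_le_of_notMem_convex {C : Set V} (hC : Convex ℝ C)
    (hne : C.Nonempty) {x : V} (hx : x ∉ C) :
    ∃ φ : StrongDual ℝ V, φ ≠ 0 ∧ ∀ y ∈ C, φ y ≤ φ x := by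
  by_cases hspan : affineSpan ℝ C = ⊤
  · exact geometric_hahn_banach_of_nonempty_interior_point hC (fun h ↦ hx (interior_subset h))
      (hC.interior_nonempty_iff_affineSpan_eq_top.2 hspan)
  · obtain ⟨φ, hφ, hconst⟩ := exists_strongDual_ne_zero_eq_on_of_affineSpan_ne_top hne hspan
    obtain ⟨z, hz⟩ := hne
    rcases le_total (φ z) (φ x) with h | h
    · exact ⟨φ, hφ, fun y hy ↦ (hconst y hy z hz).trans_le h⟩
    · exact ⟨-φ, neg_ne_zero.2 hφ, fun y hy ↦ neg_le_neg (h.trans_eq (hconst z hz y hy))⟩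

variable {Ω : Type*} [MeasurableSpace Ω] {μ : Measure Ω}

lemma zero_mem_of_convex_of_integral_eq_zero [NeZero μ] {C : Set V} (hC : Convex ℝ C) {g : Ω → V}
    (hg : Integrable g μ) (hgC : ∀ᵐ ω ∂μ, g ω ∈ C) (hg0 : ∫ ω, g ω ∂μ = 0) : (0 : V) ∈ C := by
  induction hn : Module.finrank ℝ V using Nat.strong_induction_on generalizing V with
  | _ n ih =>
  subst hn
  by_contra h0
  have hne : C.Nonempty := hgC.exists.imp' g fun _ ↦ id
  obtain ⟨φ, hφ, hle⟩ := exists_strongDual_ne_zero_le_of_notMem_convex hC hne h0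
  have hφg : ∀ᵐ ω ∂μ, φ (g ω) = 0 := by
    have hnonpos : ∀ᵐ ω ∂μ, φ (g ω) ≤ 0 := hgC.mono fun ω hω ↦ by simpa using hle _ hω
    have hint : ∫ ω, φ (g ω) ∂μ = ∫ _, 0 ∂μ := by
      rw [φ.integral_comp_comm hg, hg0, map_zero, integral_zero]
    exact (integral_eq_iff_of_ae_le (φ.integrable_comp hg) (integrable_zero Ω ℝ μ) hnonpos).1 hint
  let K : Submodule ℝ V := φ.ker
  have hK : Module.finrank ℝ K < Module.finrank ℝ V :=
    Submodule.finrank_lt fun h ↦ hφ (by ext v; exact (Submodule.eq_top_iff'.1 h v))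
  obtain ⟨π, hπ⟩ := Submodule.ClosedComplemented.of_finiteDimensional K
  have hπg : ∀ᵐ ω ∂μ, π (g ω) ∈ K.subtype ⁻¹' C := by
    filter_upwards [hφg, hgC] with ω hker hω
    have hproj : π (g ω) = ⟨g ω, hker⟩ := hπ ⟨g ω, hker⟩
    simpa [hproj] using hω
  refine h0 (ih _ hK (C := K.subtype ⁻¹' C) (hC.linear_preimage K.subtype)
    (π.integrable_comp hg) hπg ?_ rfl)
  rw [π.integral_comp_comm hg, hg0, map_zero]

theorem integral_mem_of_convex_finiteDimensional [IsProbabilityMeasure μ] {C : Set V}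
    (hC : Convex ℝ C) {g : Ω → V} (hg : Integrable g μ) (hgC : ∀ᵐ ω ∂μ, g ω ∈ C) :
    ∫ ω, g ω ∂μ ∈ C := by
  set m := ∫ ω, g ω ∂μ
  have hshift : (0 : V) ∈ (fun v ↦ m + v) ⁻¹' C := by
    refine zero_mem_of_convex_of_integral_eq_zero (g := fun ω ↦ g ω - m)
      (hC.translate_preimage_right m) (hg.sub (integrable_const m)) ?_ ?_
    · simpa using hgC
    · simp [integral_sub hg (integrable_const m), m]
  simpa using hshift

end ConvexIntegral

section WeightReduction

variable {ι 𝕜 V : Type*} [Field 𝕜] [AddCommGroup V] [Module 𝕜 V]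

lemma exists_affine_dependence_of_not_affineIndependent [Fintype ι] {s : Set ι} {z : ι → V}
    (h : ¬ AffineIndependent 𝕜 fun i : s ↦ z i) :
    ∃ c : ι → 𝕜, c ≠ 0 ∧ support c ⊆ s ∧ ∑ i, c i = 0 ∧ ∑ i, c i • z i = 0 := by
  classical
  simp only [affineIndependent_iff_of_fintype, not_forall] at h
  obtain ⟨b, hb0, hbz, j, hbj⟩ := h
  rw [Finset.weightedVSub_eq_linear_combination _ hb0] at hbz
  let c : ι → 𝕜 := extend Subtype.val b 0
  have hc : ∀ i : s, c i = b i := Subtype.val_injective.extend_apply b 0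
  have hcs : ∀ i ∉ Set.range (Subtype.val : s → ι), c i = 0 := fun i ↦ extend_apply' b (0 : ι → 𝕜) i
  refine ⟨c, fun h ↦ hbj ?_, fun i hi ↦ ?_, ?_, ?_⟩
  · rw [← hc, h, Pi.zero_apply]
  · by_contra his
    exact hi (hcs i (by simpa using his))
  · rw [← hb0]
    exact (Fintype.sum_of_injective _ Subtype.val_injective b c hcs fun i ↦ (hc i).symm).symm
  · rw [← hbz]
    exact (Fintype.sum_of_injective _ Subtype.val_injective (fun i : s ↦ b i • z i)
      (fun i ↦ c i • z i) (fun i hi ↦ by rw [hcs i hi, zero_smul]) fun i ↦ by rw [hc]).symm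

variable [LinearOrder 𝕜] [IsStrictOrderedRing 𝕜]

lemma exists_add_smul_nonneg_support_ssubset [Finite ι] {w c : ι → 𝕜} (hw : 0 ≤ w)
    (hcw : support c ⊆ support w) (hc : ∃ i, c i < 0) :
    ∃ t : 𝕜, 0 ≤ t ∧ 0 ≤ w + t • c ∧ support (w + t • c) ⊂ support w := by
  obtain ⟨a, ha, hmin⟩ : ∃ a, c a < 0 ∧ ∀ i, c i < 0 → w a / -c a ≤ w i / -c i :=
    Set.exists_min_image {i | c i < 0} (fun i ↦ w i / -c i) (Set.toFinite _) hc
  set t := w a / -c a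
  have ht : 0 ≤ t := div_nonneg (hw a) (neg_nonneg.2 ha.le)
  have hta : (w + t • c) a = 0 := by
    simp [t, div_neg, div_mul_cancel₀ _ ha.ne]
  refine ⟨t, ht, fun i ↦ ?_, ?_⟩
  · rcases lt_or_ge (c i) 0 with hi | hi
    · have hle : t * -c i ≤ w i := (le_div_iff₀ (neg_pos.2 hi)).1 (hmin i hi)
      simpa [neg_le_iff_add_nonneg] using hle
    · exact add_nonneg (hw i) (mul_nonneg ht hi)
  · refine (Set.ssubset_iff_of_subset fun i hi ↦ ?_).2 ⟨a, hcw ha.ne, by simpa using hta⟩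
    by_contra hwi
    have hci : c i = 0 := notMem_support.1 fun h ↦ hwi (hcw h)
    exact hi (by simp [notMem_support.1 hwi, hci])

variable [Fintype ι]

lemma exists_mem_stdSimplex_support_ssubset {z : ι → V} (F : ι → 𝕜) {w : ι → 𝕜}
    (hw : w ∈ stdSimplex 𝕜 ι) (hdep : ¬ AffineIndependent 𝕜 fun i : support w ↦ z i) :
    ∃ w' ∈ stdSimplex 𝕜 ι, ∑ i, w' i • z i = ∑ i, w i • z i ∧
      ∑ i, w i * F i ≤ ∑ i, w' i * F i ∧ support w' ⊂ support w := by
  obtain ⟨c, hc, hcw, hc0, hcz, hcF⟩ : ∃ c : ι → 𝕜, c ≠ 0 ∧ support c ⊆ support w ∧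
      ∑ i, c i = 0 ∧ ∑ i, c i • z i = 0 ∧ 0 ≤ ∑ i, c i * F i := by
    obtain ⟨c, hc, hcw, hc0, hcz⟩ := exists_affine_dependence_of_not_affineIndependent hdep
    rcases le_total 0 (∑ i, c i * F i) with h | h
    · exact ⟨c, hc, hcw, hc0, hcz, h⟩
    · exact ⟨-c, neg_ne_zero.2 hc, by rwa [support_neg], by simp [hc0], by simp [hcz],
        by simpa using h⟩
  have hneg : ∃ i, c i < 0 := by
    by_contra! hnonneg
    exact hc ((Fintype.sum_eq_zero_iff_of_nonneg hnonneg).1 hc0)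
  obtain ⟨t, ht, hnonneg, hsupp⟩ := exists_add_smul_nonneg_support_ssubset hw.1 hcw hneg
  refine ⟨w + t • c, ⟨hnonneg, ?_⟩, ?_, ?_, hsupp⟩
  · simp [Finset.sum_add_distrib, ← Finset.mul_sum, hc0, hw.2]
  · simp [add_smul, mul_smul, Finset.sum_add_distrib, ← Finset.smul_sum, hcz]
  · simpa [add_mul, mul_assoc, Finset.sum_add_distrib, ← Finset.mul_sum] using mul_nonneg ht hcF

theorem exists_mem_stdSimplex_affineIndependent_support (z : ι → V) (F : ι → 𝕜) {w : ι → 𝕜}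
    (hw : w ∈ stdSimplex 𝕜 ι) :
    ∃ w' ∈ stdSimplex 𝕜 ι, ∑ i, w' i • z i = ∑ i, w i • z i ∧
      ∑ i, w i * F i ≤ ∑ i, w' i * F i ∧ AffineIndependent 𝕜 fun i : support w' ↦ z i := by
  induction hs : support w using WellFoundedLT.induction generalizing w with
  | ind s ih =>
  subst hs
  by_cases hind : AffineIndependent 𝕜 fun i : support w ↦ z i
  · exact ⟨w, hw, rfl, le_rfl, hind⟩
  · obtain ⟨w₁, hw₁, hz₁, hF₁, hlt⟩ := exists_mem_stdSimplex_support_ssubset F hw hind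
    obtain ⟨w₂, hw₂, hz₂, hF₂, hind₂⟩ := ih _ hlt hw₁ rfl
    exact ⟨w₂, hw₂, hz₂.trans hz₁, hF₁.trans hF₂, hind₂⟩

end WeightReduction

section WeightedDirac

variable {ι X : Type*} [MeasurableSpace X]

/-- The measure on `X` with mass `w i` at each point `x i`; it encodes a convex combination of
points when `w` is in the standard simplex. Negative weights count as `0`. -/
noncomputable def weightedDirac (w : ι → ℝ) (x : ι → X) : Measure X :=
  Measure.sum fun i ↦ ENNReal.ofReal (w i) • Measure.dirac (x i)

variable {w : ι → ℝ} {x : ι → X}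

lemma isProbabilityMeasure_weightedDirac [Fintype ι] (hw : w ∈ stdSimplex ℝ ι) :
    IsProbabilityMeasure (weightedDirac w x) :=
  HasSum.isProbabilityMeasure_sum_dirac hw.1 (hw.2 ▸ hasSum_fintype w)

variable [MeasurableSingletonClass X]

lemma ae_weightedDirac_mem [Countable ι] {A : Set X} (hA : ∀ i ∈ support w, x i ∈ A) :
    ∀ᵐ y ∂weightedDirac w x, y ∈ A := by
  refine Measure.ae_sum_iff.2 fun i ↦ ?_
  by_cases hi : w i = 0
  · simp [hi]
  · exact Measure.ae_smul_measure (by simpa using hA i hi) _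

lemma integral_weightedDirac [Fintype ι] {E : Type*} [NormedAddCommGroup E] [NormedSpace ℝ E]
    [FiniteDimensional ℝ E] (hw : 0 ≤ w) (h : X → E) :
    ∫ y, h y ∂weightedDirac w x = ∑ i, w i • h (x i) := by
  simp only [weightedDirac, integral_sum_dirac fun _ ↦ ENNReal.ofReal_ne_top, tsum_fintype,
    ENNReal.toReal_ofReal (hw _)]

lemma support_weightedDirac_subset [Finite ι] [TopologicalSpace X] [T1Space X] :
    (weightedDirac w x).support ⊆ x '' support w :=
  Measure.support_subset_of_isClosed ((support w).toFinite.image x).isClosed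
    (ae_weightedDirac_mem fun _ ↦ Set.mem_image_of_mem x)

end WeightedDirac

lemma affineIndependent_subtype_of_subset_image {𝕜 V P ι X : Type*} [Ring 𝕜] [AddCommGroup V]
    [Module 𝕜 V] [AddTorsor V P] {s : Set ι} {S : Set X} {x : ι → X} {g : X → P}
    (h : AffineIndependent 𝕜 fun i : s ↦ g (x i)) (hS : S ⊆ x '' s) :
    AffineIndependent 𝕜 fun y : S ↦ g y := by
  choose j hjs hj using fun y : S ↦ hS y.2
  have hinj : Injective fun y : S ↦ (⟨j y, hjs y⟩ : s) := fun y y' hyy' ↦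
    Subtype.ext (by rw [← hj y, ← hj y', Subtype.mk.inj hyy'])
  simpa [Function.comp_def, hj] using h.comp_embedding ⟨_, hinj⟩

section CaratheodoryIntegral

variable {X V : Type*} [MeasurableSpace X] {μ : Measure X} [IsProbabilityMeasure μ]
  [NormedAddCommGroup V] [NormedSpace ℝ V] [FiniteDimensional ℝ V] {g : X → V} {f : X → ℝ}
  {D : Set X}

lemma exists_mem_stdSimplex_sum_smul_eq_integral (hg : Integrable g μ)
    (hD : ∀ᵐ x ∂μ, x ∈ D) :
    ∃ (ι : Type) (_ : Fintype ι) (x : ι → X), (∀ i, x i ∈ D) ∧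
      ∃ w ∈ stdSimplex ℝ ι, ∑ i, w i • g (x i) = ∫ x, g x ∂μ := by
  have hmem : ∫ x, g x ∂μ ∈ convexHull ℝ (g '' D) :=
    integral_mem_of_convex_finiteDimensional (convex_convexHull ℝ _) hg
      (hD.mono fun x hx ↦ subset_convexHull ℝ _ (Set.mem_image_of_mem g hx))
  obtain ⟨ι, hι, w, z, hw0, hw1, hz, hsum⟩ := mem_convexHull_iff_exists_fintype.1 hmem
  choose x hxD hx using hz
  exact ⟨ι, hι, x, hxD, w, ⟨hw0, hw1⟩, by simpa only [hx] using hsum⟩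

theorem exists_measure_affineIndependent_support [TopologicalSpace X] [T1Space X]
    [OpensMeasurableSpace X] (hg : Integrable g μ) (hf : Integrable f μ) (hD : ∀ᵐ x ∂μ, x ∈ D) :
    ∃ ν : ProbabilityMeasure X, (∀ᵐ x ∂(ν : Measure X), x ∈ D) ∧
      ∫ x, g x ∂(ν : Measure X) = ∫ x, g x ∂μ ∧ ∫ x, f x ∂μ ≤ ∫ x, f x ∂(ν : Measure X) ∧
      AffineIndependent ℝ fun x : (ν : Measure X).support ↦ g x := by
  obtain ⟨ι, _, x, hxD, w, hw, hsum⟩ :=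
    exists_mem_stdSimplex_sum_smul_eq_integral (hg.prodMk hf) hD
  obtain ⟨hsumg, hsumf⟩ : ∑ i, w i • g (x i) = ∫ x, g x ∂μ ∧ ∑ i, w i * f (x i) = ∫ x, f x ∂μ := by
    simpa [integral_pair hg hf, Prod.ext_iff, Prod.fst_sum, Prod.snd_sum] using hsum
  obtain ⟨w', hw', hg', hf', hind⟩ :=
    exists_mem_stdSimplex_affineIndependent_support (g ∘ x) (f ∘ x) hw
  refine ⟨⟨weightedDirac w' x, isProbabilityMeasure_weightedDirac hw'⟩,
    ae_weightedDirac_mem fun i _ ↦ hxD i, ?_, ?_,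
    affineIndependent_subtype_of_subset_image hind support_weightedDirac_subset⟩
  · exact (integral_weightedDirac hw'.1 g).trans (hg'.trans hsumg)
  · exact hsumf.ge.trans (hf'.trans_eq (integral_weightedDirac hw'.1 f).symm)

end CaratheodoryIntegral

section Belief

variable {Θ : Type*} [Fintype Θ]

lemma integrable_coe_belief (p : ProbabilityMeasure (Belief Θ)) :
    Integrable (fun x : Belief Θ ↦ x.1) (p : Measure (Belief Θ)) :=
  continuous_subtype_val.integrable_of_hasCompactSupport (.of_compactSpace _)

lemma mem_IPolF_iff_integral_eq {p : ProbabilityMeasure (Belief Θ)} {μ0 : Θ → ℝ} :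
    p ∈ IPolF μ0 ↔ ∫ x : Belief Θ, x.1 ∂(p : Measure (Belief Θ)) = μ0 := by
  simp only [IPolF, Set.mem_ofPred_eq, funext_iff,
    eval_integral (integrable_coe_belief p).eval]

lemma msupport_eq_support (q : ProbabilityMeasure (Belief Θ)) :
    msupport q = (q : Measure (Belief Θ)).support := by
  rw [Measure.support_eq_forall_isOpen]
  ext x
  exact forall_congr' fun U ↦ by simp only [pos_iff_ne_zero, imp.swap]

end Belief

theorem exists_affineIndependent_support_policy_general {Θ : Type*} [Fintype Θ] {μ0 : Θ → ℝ}
    {D : Set (Belief Θ)} {f : Belief Θ → ℝ} {p : ProbabilityMeasure (Belief Θ)}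
    (hf : Integrable f (p : Measure (Belief Θ))) (hp : p ∈ IPolF μ0)
    (hpD : ∀ᵐ x ∂(p : Measure (Belief Θ)), x ∈ D) :
    ∃ q : ProbabilityMeasure (Belief Θ), q ∈ IPolF μ0 ∧
      (∀ᵐ x ∂(q : Measure (Belief Θ)), x ∈ D) ∧
      AffineIndependent ℝ (fun x : msupport q ↦ x.1.1) ∧
      ∫ x, f x ∂(p : Measure (Belief Θ)) ≤ ∫ x, f x ∂(q : Measure (Belief Θ)) := by
  obtain ⟨q, hqD, hbar, hle, hind⟩ :=
    exists_measure_affineIndependent_support (integrable_coe_belief p) hf hpD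
  refine ⟨q, ?_, hqD, ?_, hle⟩
  · exact mem_IPolF_iff_integral_eq.2 (hbar.trans (mem_IPolF_iff_integral_eq.1 hp))
  · rwa [msupport_eq_support]

/-- **Carathéodory-type lemma.** For a finite state space, any information policy `p`
with barycenter `μ0` supported on a Borel set `D` can be replaced by an information
policy `q` with the same barycenter, supported on `D`, with affinely independent
support, and with a weakly larger integral of any bounded measurable `f`. -/
theorem exists_affineIndependent_support_policy
    (Θ : Type) [Fintype Θ] [Nonempty Θ] (μ0 : Θ → ℝ) (hμ0 : μ0 ∈ stdSimplex ℝ Θ)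
    (D : Set (Belief Θ)) (hD : MeasurableSet D)
    (f : Belief Θ → ℝ) (hfm : Measurable f) (hfb : ∃ C : ℝ, ∀ x, |f x| ≤ C)
    (p : ProbabilityMeasure (Belief Θ)) (hp : p ∈ IPolF μ0)
    (hpD : (p : Measure (Belief Θ)) D = 1) :
    ∃ q : ProbabilityMeasure (Belief Θ), q ∈ IPolF μ0 ∧
      (q : Measure (Belief Θ)) D = 1 ∧
      AffineIndependent ℝ (fun x : msupport q => ((x : Belief Θ) : Θ → ℝ)) ∧
      ∫ x, f x ∂(p : Measure (Belief Θ)) ≤ ∫ x, f x ∂(q : Measure (Belief Θ)) := by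
  obtain ⟨C, hC⟩ := hfb
  have hf : Integrable f (p : Measure (Belief Θ)) :=
    .of_bound hfm.aestronglyMeasurable C (.of_forall hC)
  obtain ⟨q, hq, hqD, hind, hle⟩ :=
    exists_affineIndependent_support_policy_general hf hp ((mem_ae_iff_prob_eq_one hD).2 hpD)
  exact ⟨q, hq, (mem_ae_iff_prob_eq_one hD).1 hqD, hind, hle⟩
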